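/- For each p ∈ Δ(K), the maximum of d(u,v) over information structures u, v with marg_K u = marg_K v = p equals 2·(1 − max_{k∈K} p_k). -/

import Mathlib

open scoped BigOperators ENNReal

namespace ValueDistance

/-- An information structure: a probability distribution on `K × ℕ × ℕ`
(state, signal of player 1, signal of player 2). -/
abbrev InfoStruct (K : Type) := PMF (K × ℕ × ℕ)

/-- A behavior strategy / garbling : a map `ℕ → Δ(ℕ)`. -/
abbrev Garbling : Type := ℕ → PMF ℕ

variable {K : Type}

/-- `g` is a payoff function with action bound `L` : values in `[-1,1]`,
`g k i j = -1` when `i ≥ L`, and `g k i j = 1` when `i < L` and `j ≥ L`. -/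
def IsPayoffL (L : ℕ) (g : K → ℕ → ℕ → ℝ) : Prop :=
  (∀ k i j, g k i j ∈ Set.Icc (-1 : ℝ) 1) ∧
  (∀ k i j, L ≤ i → g k i j = -1) ∧
  (∀ k i j, i < L → L ≤ j → g k i j = 1)

/-- `g` belongs to the set `𝒢` of payoff functions. -/
def IsPayoff (g : K → ℕ → ℕ → ℝ) : Prop := ∃ L, IsPayoffL L g

/-- `g` belongs to the set `𝒢₁` of single-agent (player 1) problems. -/
def IsPayoff1 (g : K → ℕ → ℕ → ℝ) : Prop :=
  IsPayoff g ∧ ∀ k i j j', g k i j = g k i j'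

/-- Expected payoff in the Bayesian game `Γ(u,g)` when player 1 uses the behavior
strategy `σ` and player 2 uses `τ`. -/
noncomputable def payoff (u : InfoStruct K) (g : K → ℕ → ℕ → ℝ)
    (σ τ : Garbling) : ℝ :=
  ∑' (x : K × ℕ × ℕ) (i : ℕ) (j : ℕ),
    (u x).toReal * (σ x.2.1 i).toReal * (τ x.2.2 j).toReal * g x.1 i j

/-- The value `val(u,g)` of the zero-sum Bayesian game `Γ(u,g)`
(the common value of `sup inf` and `inf sup` of the expected payoff;
we take `sup inf` as the definition). -/
noncomputable def val (u : InfoStruct K) (g : K → ℕ → ℕ → ℝ) : ℝ :=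
  ⨆ σ : Garbling, ⨅ τ : Garbling, payoff u g σ τ

/-- Total variation distance `‖u − v‖`. -/
noncomputable def tv {α : Type} (u v : PMF α) : ℝ :=
  ∑' x : α, |(u x).toReal - (v x).toReal|

/-- `q.u` : player 1's signal garbled through `q`. -/
noncomputable def garbleLeft (q : Garbling) (u : InfoStruct K) : InfoStruct K :=
  u.bind (fun x => (q x.2.1).map (fun c => (x.1, c, x.2.2)))

/-- `u.q` : player 2's signal garbled through `q`. -/
noncomputable def garbleRight (u : InfoStruct K) (q : Garbling) : InfoStruct K :=
  u.bind (fun x => (q x.2.2).map (fun d => (x.1, x.2.1, d)))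

/-- The value-based distance `d(u,v) = sup_{g ∈ 𝒢} |val(u,g) − val(v,g)|`. -/
noncomputable def dVal (u v : InfoStruct K) : ℝ :=
  ⨆ g : {g : K → ℕ → ℕ → ℝ // IsPayoff g}, |val u g.1 - val v g.1|

/-- The single-agent distance `d₁(u,v) = sup_{g ∈ 𝒢₁} |val(u,g) − val(v,g)|`. -/
noncomputable def d1 (u v : InfoStruct K) : ℝ :=
  ⨆ g : {g : K → ℕ → ℕ → ℝ // IsPayoff1 g}, |val u g.1 - val v g.1|

/-- Marginal of an information structure on `K × ℕ` (state, player 1's signal). -/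
noncomputable def marg1 (u : InfoStruct K) : PMF (K × ℕ) :=
  u.map (fun x => (x.1, x.2.1))

/-- Garbling of a single-agent information structure:
`(q.w)(k,c) = Σ_s w(k,s)·q(s)({c})`. -/
noncomputable def garble1 (q : Garbling) (w : PMF (K × ℕ)) : PMF (K × ℕ) :=
  w.bind (fun x => (q x.2).map (fun c => (x.1, c)))

/-- Marginal of an information structure on the states. -/
noncomputable def margK (u : InfoStruct K) : PMF K := u.map Prod.fst

/-- Marginal of an information structure on `K × ℕ` (state, player 2's signal). -/
noncomputable def margKD (u : InfoStruct K) : PMF (K × ℕ) :=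
  u.map (fun x => (x.1, x.2.2))

/-- `σ.q` : on signal `c`, draw `c'` according to `q(c)` and play `σ(c')`. -/
noncomputable def compGarble (σ q : Garbling) : Garbling :=
  fun c => (q c).bind σ

/-- `u ∈ 𝒰(L)` : both players' signals are `< L` with probability 1. -/
def InU (L : ℕ) (u : InfoStruct K) : Prop :=
  ∀ x : K × ℕ × ℕ, u x ≠ 0 → x.2.1 < L ∧ x.2.2 < L

/-- `q ∈ 𝒬(L)` : garbling with values supported on `{0,…,L−1}`. -/
def GarblingIn (L : ℕ) (q : Garbling) : Prop :=
  ∀ n m, q n m ≠ 0 → m < L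

/-- The two players' signals are conditionally independent given the state:
`u(k)·u(k,c,d) = u(k,c)·u(k,d)` for all `k, c, d`
(equivalently `u(c,d|k) = u(c|k)·u(d|k)` whenever `u(k) > 0`). -/
def CondIndep (u : InfoStruct K) : Prop :=
  ∀ (k : K) (c d : ℕ),
    (∑' y : ℕ × ℕ, u (k, y)) * u (k, c, d)
      = (∑' d' : ℕ, u (k, c, d')) * (∑' c' : ℕ, u (k, c', d))

end ValueDistance

/-!
Let `k₀` be a most likely state. Upper bound: given a strategy `σ` of player 1 in `v`, let him play
in `u`, whatever his signal, the conditional law of his action under `σ` in `v` given `k₀`; against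
any `τ` in `u`, compare with the play in `v` where player 2 uses the law of her action under `τ` in
`u` given `k₀`. Conditionally on `k₀` the two plays yield the same payoff, as both are independent
draws from the same two laws, so the payoffs differ by at most `2` times the probability of the
other states.

The bound is attained when player 1 alone knows the state in `u` and player 2 alone knows it in `v`,
by the game where each player guesses the state and is paid by the other for a correct guess. The
uninformed player errs with probability at least `1 - p k₀`. Payoff functions have finitely many
relevant actions, so when the state space is infinite the players only guess a label of the state,
one label being shared by a set of states of total probability at most `p k₀`.
-/

namespace ValueDistance

section Expectation

variable {α β : Type*} {C D : ℝ}

/-- The expectation of a real function under a probability mass function, as the series by which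
`payoff` is defined; this avoids choosing σ-algebras. It is meaningful for bounded functions and has
the junk value `0` when the series diverges. -/
noncomputable def expect (a : PMF α) (f : α → ℝ) : ℝ := ∑' x, (a x).toReal * f x

lemma summable_toReal (a : PMF α) : Summable fun x => (a x).toReal :=
  ENNReal.summable_toReal a.tsum_coe_ne_top

lemma tsum_toReal (a : PMF α) : ∑' x, (a x).toReal = 1 := by
  rw [← ENNReal.tsum_toReal_eq a.apply_ne_top, a.tsum_coe, ENNReal.toReal_one]

lemma summable_toReal_mul (a : PMF α) {f : α → ℝ} (hf : ∀ x, |f x| ≤ C) :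
    Summable fun x => (a x).toReal * f x := by
  refine Summable.of_norm_bounded ((summable_toReal a).mul_right C) fun x => ?_
  rw [Real.norm_eq_abs, abs_mul, abs_of_nonneg ENNReal.toReal_nonneg]
  exact mul_le_mul_of_nonneg_left (hf x) ENNReal.toReal_nonneg

lemma expect_const (a : PMF α) (c : ℝ) : expect a (fun _ => c) = c := by
  rw [expect, tsum_mul_right, tsum_toReal, one_mul]

lemma expect_pure (x : α) (f : α → ℝ) : expect (PMF.pure x) f = f x := by
  classical
  rw [expect, tsum_eq_single x fun y hy => by simp [PMF.pure_apply, hy]]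
  simp

lemma expect_neg (a : PMF α) (f : α → ℝ) : expect a (fun x => -f x) = -expect a f := by
  simp only [expect, mul_neg, tsum_neg]

lemma expect_sub (a : PMF α) {f g : α → ℝ} (hf : ∀ x, |f x| ≤ C) (hg : ∀ x, |g x| ≤ D) :
    expect a (fun x => f x - g x) = expect a f - expect a g := by
  simp only [expect, mul_sub]
  exact (summable_toReal_mul a hf).tsum_sub (summable_toReal_mul a hg)

lemma expect_congr {a : PMF α} {f g : α → ℝ} (h : ∀ x ∈ a.support, f x = g x) :
    expect a f = expect a g := by
  refine tsum_congr fun x => ?_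
  by_cases hx : a x = 0
  · simp only [hx, ENNReal.toReal_zero, zero_mul]
  · rw [h x hx]

lemma expect_mono (a : PMF α) {f g : α → ℝ} (hf : ∀ x, |f x| ≤ C) (hg : ∀ x, |g x| ≤ D)
    (hfg : ∀ x, f x ≤ g x) : expect a f ≤ expect a g :=
  Summable.tsum_le_tsum (fun x => mul_le_mul_of_nonneg_left (hfg x) ENNReal.toReal_nonneg)
    (summable_toReal_mul a hf) (summable_toReal_mul a hg)

lemma abs_expect_le_expect (a : PMF α) {f g : α → ℝ} (hg : ∀ x, |g x| ≤ C)
    (hfg : ∀ x, |f x| ≤ g x) : |expect a f| ≤ expect a g := by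
  rw [← Real.norm_eq_abs]
  refine tsum_of_norm_bounded (summable_toReal_mul a hg).hasSum fun x => ?_
  rw [Real.norm_eq_abs, abs_mul, abs_of_nonneg ENNReal.toReal_nonneg]
  exact mul_le_mul_of_nonneg_left (hfg x) ENNReal.toReal_nonneg

lemma abs_expect_le (a : PMF α) {f : α → ℝ} (hf : ∀ x, |f x| ≤ C) : |expect a f| ≤ C :=
  (abs_expect_le_expect a (fun _ => le_rfl) hf).trans_eq (expect_const a C)

lemma summable_toReal_mul_toReal (a : PMF α) (m : α → PMF β) :
    Summable fun z : α × β => (a z.1).toReal * (m z.1 z.2).toReal := by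
  have nonneg : 0 ≤ fun z : α × β => (a z.1).toReal * (m z.1 z.2).toReal := fun z =>
    mul_nonneg ENNReal.toReal_nonneg ENNReal.toReal_nonneg
  have tsum_inner (x : α) : ∑' y, (a x).toReal * (m x y).toReal = (a x).toReal := by
    rw [tsum_mul_left, tsum_toReal, mul_one]
  exact (summable_prod_of_nonneg nonneg).2
    ⟨fun x => (summable_toReal (m x)).mul_left (a x).toReal,
      (summable_toReal a).congr fun x => (tsum_inner x).symm⟩

lemma expect_expect_eq_tsum_tsum (a : PMF α) (m : α → PMF β) {f : α → β → ℝ}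
    (hf : ∀ x y, |f x y| ≤ C) :
    expect a (fun x => expect (m x) (f x)) =
      ∑' y, ∑' x, (a x).toReal * ((m x y).toReal * f x y) := by
  have joint_summable : Summable (Function.uncurry fun (x : α) (y : β) =>
      (a x).toReal * ((m x y).toReal * f x y)) := by
    refine Summable.of_norm_bounded ((summable_toReal_mul_toReal a m).mul_right C) fun z => ?_
    rw [Function.uncurry, ← mul_assoc, Real.norm_eq_abs, abs_mul,
      abs_of_nonneg (mul_nonneg ENNReal.toReal_nonneg ENNReal.toReal_nonneg)]
    exact mul_le_mul_of_nonneg_left (hf _ _)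
      (mul_nonneg ENNReal.toReal_nonneg ENNReal.toReal_nonneg)
  simp only [expect, ← tsum_mul_left]
  exact joint_summable.tsum_comm.symm

lemma expect_comm (a : PMF α) (b : PMF β) {f : α → β → ℝ} (hf : ∀ x y, |f x y| ≤ C) :
    expect a (fun x => expect b (f x)) = expect b (fun y => expect a (fun x => f x y)) := by
  rw [expect_expect_eq_tsum_tsum a (fun _ => b) hf]
  simp only [expect, ← tsum_mul_left, mul_left_comm]

lemma expect_bind (a : PMF α) (m : α → PMF β) {f : β → ℝ} (hf : ∀ y, |f y| ≤ C) :
    expect (a.bind m) f = expect a (fun x => expect (m x) f) := by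
  rw [expect_expect_eq_tsum_tsum a m fun _ => hf]
  refine tsum_congr fun y => ?_
  have mass_bind : (a.bind m y).toReal = ∑' x, (a x).toReal * (m x y).toReal := by
    rw [PMF.bind_apply, ENNReal.tsum_toReal_eq fun x =>
      ENNReal.mul_ne_top (a.apply_ne_top x) ((m x).apply_ne_top y)]
    simp only [ENNReal.toReal_mul]
  simp only [mass_bind, ← tsum_mul_right, mul_assoc]

lemma expect_map (a : PMF α) (m : α → β) {f : β → ℝ} (hf : ∀ y, |f y| ≤ C) :
    expect (a.map m) f = expect a (fun x => f (m x)) := by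
  rw [← PMF.bind_pure_comp, expect_bind _ _ hf]
  simp only [Function.comp_apply, expect_pure]

lemma toReal_mul_expect_filter (a : PMF α) (s : Set α) (hs : ∃ x ∈ s, x ∈ a.support)
    (f : α → ℝ) :
    (a.toOuterMeasure s).toReal * expect (a.filter s hs) f = expect a (s.indicator f) := by
  have mass_ne_zero : (a.toOuterMeasure s).toReal ≠ 0 := by
    refine ENNReal.toReal_ne_zero.2 ⟨fun h => ?_, ?_⟩
    · obtain ⟨x, hxs, hxa⟩ := hs
      exact Set.disjoint_left.1 ((a.toOuterMeasure_apply_eq_zero_iff s).1 h) hxa hxs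
    · rw [PMF.toOuterMeasure_apply]
      exact a.tsum_coe_indicator_ne_top s
  rw [expect, ← tsum_mul_left]
  refine tsum_congr fun x => ?_
  rw [PMF.filter_apply, ← PMF.toOuterMeasure_apply, ENNReal.toReal_mul, ENNReal.toReal_inv]
  by_cases hx : x ∈ s
  · simp only [Set.indicator_of_mem hx]
    field_simp
  · simp only [Set.indicator_of_notMem hx, ENNReal.toReal_zero, zero_mul, mul_zero]

lemma abs_expect_sub_mul_expect_filter_le (a : PMF α) (s : Set α)
    (hs : ∃ x ∈ s, x ∈ a.support) {f : α → ℝ} (hf : ∀ x, |f x| ≤ C) :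
    |expect a f - (a.toOuterMeasure s).toReal * expect (a.filter s hs) f| ≤
      C * (1 - (a.toOuterMeasure s).toReal) := by
  have hC : |C| ≤ C := (abs_of_nonneg ((abs_nonneg _).trans (hf hs.choose))).le
  have abs_indicator_le {g : α → ℝ} (hg : ∀ x, |g x| ≤ C) (t : Set α) (x : α) :
      |t.indicator g x| ≤ C :=
    (norm_indicator_le_norm_self g x).trans (hg x)
  calc |expect a f - (a.toOuterMeasure s).toReal * expect (a.filter s hs) f|
      = |expect a fun x => f x - s.indicator f x| := by
        rw [toReal_mul_expect_filter, expect_sub a hf (abs_indicator_le hf s)]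
    _ = |expect a (sᶜ.indicator f)| := by rw [Set.indicator_compl]; rfl
    _ ≤ expect a (sᶜ.indicator fun _ => C) :=
        abs_expect_le_expect a (abs_indicator_le (fun _ => hC) sᶜ) fun x =>
          (norm_indicator_eq_indicator_norm f x).trans_le (Set.indicator_le_indicator (hf x))
    _ = expect a fun x => C - s.indicator (fun _ => C) x := by rw [Set.indicator_compl]; rfl
    _ = C * (1 - (a.toOuterMeasure s).toReal) := by
        rw [expect_sub a (fun _ => hC) (abs_indicator_le (fun _ => hC) s),
          ← toReal_mul_expect_filter a s hs, expect_const, expect_const]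
        ring

end Expectation

section Game

variable {K : Type} {α β γ : Type*} {C : ℝ}

/-- The bilinear extension of a matrix of payoffs to mixed actions. -/
noncomputable def mixedPayoff (g : α → β → ℝ) (s : PMF α) (t : PMF β) : ℝ :=
  expect s fun i => expect t fun j => g i j

lemma abs_mixedPayoff_le {g : α → β → ℝ} (hg : ∀ i j, |g i j| ≤ C) (s : PMF α) (t : PMF β) :
    |mixedPayoff g s t| ≤ C :=
  abs_expect_le _ fun i => abs_expect_le _ (hg i)

lemma mixedPayoff_bind_left {g : α → β → ℝ} (hg : ∀ i j, |g i j| ≤ C) (a : PMF γ)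
    (s : γ → PMF α) (t : PMF β) :
    mixedPayoff g (a.bind s) t = expect a fun x => mixedPayoff g (s x) t :=
  expect_bind _ _ fun i => abs_expect_le _ (hg i)

lemma mixedPayoff_bind_right {g : α → β → ℝ} (hg : ∀ i j, |g i j| ≤ C) (a : PMF γ)
    (s : PMF α) (t : γ → PMF β) :
    mixedPayoff g s (a.bind t) = expect a fun x => mixedPayoff g s (t x) := by
  simp only [mixedPayoff, expect_bind _ _ (hg _)]
  exact expect_comm _ _ fun i _ => abs_expect_le _ (hg i)

lemma payoff_eq_expect (u : InfoStruct K) (g : K → ℕ → ℕ → ℝ) (σ τ : Garbling) :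
    payoff u g σ τ = expect u fun x => mixedPayoff (g x.1) (σ x.2.1) (τ x.2.2) := by
  simp only [payoff, mixedPayoff, expect, ← tsum_mul_left, mul_assoc]

lemma abs_payoff_le (u : InfoStruct K) {g : K → ℕ → ℕ → ℝ} (hg : ∀ k i j, |g k i j| ≤ C)
    (σ τ : Garbling) : |payoff u g σ τ| ≤ C := by
  rw [payoff_eq_expect]
  exact abs_expect_le _ fun x => abs_mixedPayoff_le (hg x.1) _ _

lemma iInf_payoff_le (u : InfoStruct K) {g : K → ℕ → ℕ → ℝ} (hg : ∀ k i j, |g k i j| ≤ C)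
    (σ τ : Garbling) : ⨅ τ, payoff u g σ τ ≤ payoff u g σ τ :=
  ciInf_le ⟨-C, Set.forall_mem_range.2 fun τ => (abs_le.1 (abs_payoff_le u hg σ τ)).1⟩ τ

lemma val_le {u : InfoStruct K} {g : K → ℕ → ℕ → ℝ} (hg : ∀ k i j, |g k i j| ≤ C) {c : ℝ}
    (h : ∀ σ, ∃ τ, payoff u g σ τ ≤ c) : val u g ≤ c :=
  ciSup_le fun σ => let ⟨τ, hτ⟩ := h σ; (iInf_payoff_le u hg σ τ).trans hτ

lemma le_val {u : InfoStruct K} {g : K → ℕ → ℕ → ℝ} (hg : ∀ k i j, |g k i j| ≤ C) {c : ℝ}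
    (σ : Garbling) (h : ∀ τ, c ≤ payoff u g σ τ) : c ≤ val u g := by
  have bddAbove : BddAbove (Set.range fun σ => ⨅ τ, payoff u g σ τ) :=
    ⟨C, Set.forall_mem_range.2 fun σ =>
      (iInf_payoff_le u hg σ σ).trans (abs_le.1 (abs_payoff_le u hg σ σ)).2⟩
  exact (le_ciInf h).trans (le_ciSup bddAbove σ)

lemma abs_val_le (u : InfoStruct K) {g : K → ℕ → ℕ → ℝ} (hg : ∀ k i j, |g k i j| ≤ C) :
    |val u g| ≤ C :=
  abs_le.2 ⟨le_val hg default fun τ => (abs_le.1 (abs_payoff_le u hg _ τ)).1,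
    val_le hg fun σ => ⟨σ, (abs_le.1 (abs_payoff_le u hg σ σ)).2⟩⟩

lemma IsPayoff.abs_le_one {g : K → ℕ → ℕ → ℝ} (hg : IsPayoff g) (k : K) (i j : ℕ) :
    |g k i j| ≤ 1 :=
  let ⟨_, hg, _⟩ := hg
  abs_le.2 (hg k i j)

lemma isPayoff_neg_one : IsPayoff fun (_ : K) (_ _ : ℕ) => (-1 : ℝ) :=
  ⟨0, by norm_num, fun _ _ _ _ => rfl, fun _ _ _ hi => absurd hi (Nat.not_lt_zero _)⟩

lemma dVal_le {u v : InfoStruct K} {c : ℝ}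
    (h : ∀ g : K → ℕ → ℕ → ℝ, IsPayoff g → |val u g - val v g| ≤ c) : dVal u v ≤ c :=
  haveI : Nonempty {g : K → ℕ → ℕ → ℝ // IsPayoff g} := ⟨⟨_, isPayoff_neg_one⟩⟩
  ciSup_le fun g => h g.1 g.2

lemma abs_val_sub_val_le_dVal (u v : InfoStruct K) {g : K → ℕ → ℕ → ℝ} (hg : IsPayoff g) :
    |val u g - val v g| ≤ dVal u v := by
  refine le_ciSup (f := fun g : {g : K → ℕ → ℕ → ℝ // IsPayoff g} => |val u g.1 - val v g.1|)
    ⟨1 + 1, Set.forall_mem_range.2 fun g => ?_⟩ ⟨g, hg⟩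
  exact (abs_sub _ _).trans
    (add_le_add (abs_val_le u g.2.abs_le_one) (abs_val_le v g.2.abs_le_one))

end Game

section UpperBound

variable {K : Type} {C : ℝ} {u v : InfoStruct K} {k : K} {g : K → ℕ → ℕ → ℝ}

/-- The law of player 1's action when he uses `σ` in the information structure `u`. -/
noncomputable def actionLeft (u : InfoStruct K) (σ : Garbling) : PMF ℕ :=
  u.bind fun x => σ x.2.1

/-- The law of player 2's action when she uses `τ` in the information structure `u`. -/
noncomputable def actionRight (u : InfoStruct K) (τ : Garbling) : PMF ℕ :=
  u.bind fun x => τ x.2.2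

/-- The information structure `u` conditioned on the state being `k`. -/
noncomputable def condState (u : InfoStruct K) (k : K) (hk : k ∈ (margK u).support) :
    InfoStruct K :=
  u.filter (Prod.fst ⁻¹' {k}) <| by
    obtain ⟨x, hx, rfl⟩ := (PMF.mem_support_map_iff _ _ _).1 hk
    exact ⟨x, rfl, hx⟩

lemma fst_eq_of_mem_support_condState {hk : k ∈ (margK u).support} {x : K × ℕ × ℕ}
    (hx : x ∈ (condState u k hk).support) : x.1 = k :=
  ((PMF.mem_support_filter_iff _).1 hx).1

lemma abs_payoff_sub_mul_payoff_condState_le (hg : ∀ k i j, |g k i j| ≤ C)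
    (hk : k ∈ (margK u).support) (σ τ : Garbling) :
    |payoff u g σ τ - (margK u k).toReal * payoff (condState u k hk) g σ τ| ≤
      C * (1 - (margK u k).toReal) := by
  have mass_eq : margK u k = u.toOuterMeasure (Prod.fst ⁻¹' {k}) := by
    rw [← PMF.toOuterMeasure_apply_singleton, margK, PMF.toOuterMeasure_map_apply]
  rw [payoff_eq_expect, payoff_eq_expect, mass_eq]
  exact abs_expect_sub_mul_expect_filter_le u _ _ fun x => abs_mixedPayoff_le (hg x.1) _ _

lemma payoff_const_left (hg : ∀ i j, |g k i j| ≤ C) (hu : ∀ x ∈ u.support, x.1 = k)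
    (s : PMF ℕ) (τ : Garbling) :
    payoff u g (fun _ => s) τ = mixedPayoff (g k) s (actionRight u τ) := by
  rw [payoff_eq_expect, actionRight, mixedPayoff_bind_right hg]
  exact expect_congr fun x hx => by rw [hu x hx]

lemma payoff_const_right (hg : ∀ i j, |g k i j| ≤ C) (hu : ∀ x ∈ u.support, x.1 = k)
    (σ : Garbling) (t : PMF ℕ) :
    payoff u g σ (fun _ => t) = mixedPayoff (g k) (actionLeft u σ) t := by
  rw [payoff_eq_expect, actionLeft, mixedPayoff_bind_left hg]
  exact expect_congr fun x hx => by rw [hu x hx]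

lemma val_sub_val_le (hg : ∀ k i j, |g k i j| ≤ C) (huv : margK u = margK v)
    (hk : k ∈ (margK u).support) :
    val v g - val u g ≤ 2 * (C * (1 - (margK u k).toReal)) := by
  have hkv : k ∈ (margK v).support := huv ▸ hk
  rw [sub_le_iff_le_add]
  refine ciSup_le fun σ => ?_
  let s := actionLeft (condState v k hkv) σ
  suffices h : (⨅ τ, payoff v g σ τ) - 2 * (C * (1 - (margK u k).toReal)) ≤ val u g by linarith
  refine le_val hg (fun _ => s) fun τ => ?_
  let t := actionRight (condState u k hk) τ
  have cond_eq : payoff (condState u k hk) g (fun _ => s) τ =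
      payoff (condState v k hkv) g σ fun _ => t := by
    rw [payoff_const_left (hg k) fun _ => fst_eq_of_mem_support_condState,
      payoff_const_right (hg k) fun _ => fst_eq_of_mem_support_condState]
  have near_u := abs_payoff_sub_mul_payoff_condState_le hg hk (fun _ => s) τ
  have near_v := abs_payoff_sub_mul_payoff_condState_le hg hkv σ fun _ => t
  rw [cond_eq] at near_u
  rw [← huv] at near_v
  linarith [(abs_le.1 near_u).1, (abs_le.1 near_v).2, iInf_payoff_le v hg σ fun _ => t]

lemma dVal_le_of_margK_eq (huv : margK u = margK v) (hk : k ∈ (margK u).support) :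
    dVal u v ≤ 2 * (1 - (margK u k).toReal) := by
  refine dVal_le fun g hg => abs_sub_le_iff.2 ⟨?_, ?_⟩
  · simpa only [one_mul, huv] using val_sub_val_le hg.abs_le_one huv.symm (huv ▸ hk)
  · simpa only [one_mul] using val_sub_val_le hg.abs_le_one huv hk

end UpperBound

section Guessing

variable {K : Type}

/-- The game where each player guesses the label `e k` of the state and receives `1` from the other
if the guess is correct; it is meant for labels `e k < L`, and the actions `≥ L` have the payoffs
imposed by `IsPayoffL`. -/
noncomputable def guessing (L : ℕ) (e : K → ℕ) (k : K) (i j : ℕ) : ℝ :=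
  if L ≤ i then -1 else if L ≤ j then 1 else
    (if i = e k then 1 else 0) - (if j = e k then 1 else 0)

variable {L : ℕ} {e : K → ℕ}

lemma isPayoff_guessing (L : ℕ) (e : K → ℕ) : IsPayoff (guessing L e) := by
  refine ⟨L, fun k i j => ?_, fun k i j hi => if_pos hi, fun k i j hi hj => ?_⟩
  · unfold guessing
    split_ifs <;> norm_num
  · rw [guessing, if_neg hi.not_ge, if_pos hj]

lemma guessing_label_left {k : K} (hk : e k < L) (j : ℕ) :
    guessing L e k (e k) j = if j = e k then 0 else 1 := by
  unfold guessing
  split_ifs <;> first | omega | norm_num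

lemma guessing_label_right {k : K} (hk : e k < L) (i : ℕ) :
    guessing L e k i (e k) = -if i = e k then 0 else 1 := by
  unfold guessing
  split_ifs <;> first | omega | norm_num

/-- The information structure where the state has law `p` and, in state `k`, the players receive
the signals `c k` and `d k`. -/
noncomputable def deterministicSignals (p : PMF K) (c d : K → ℕ) : InfoStruct K :=
  p.map fun k => (k, c k, d k)

lemma margK_deterministicSignals (p : PMF K) (c d : K → ℕ) :
    margK (deterministicSignals p c d) = p := by
  rw [margK, deterministicSignals, PMF.map_comp]
  exact PMF.map_id p

lemma payoff_deterministicSignals {C : ℝ} {g : K → ℕ → ℕ → ℝ} (hg : ∀ k i j, |g k i j| ≤ C)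
    (p : PMF K) (c d : K → ℕ) (σ τ : Garbling) :
    payoff (deterministicSignals p c d) g σ τ =
      expect p fun k => mixedPayoff (g k) (σ (c k)) (τ (d k)) := by
  rw [payoff_eq_expect]
  exact expect_map _ _ fun x => abs_mixedPayoff_le (hg x.1) _ _

lemma abs_ite_zero_one_le (P : Prop) [Decidable P] : |if P then (0 : ℝ) else 1| ≤ 1 := by
  split_ifs <;> norm_num

lemma expect_ne {α : Type*} [DecidableEq α] (q : PMF α) (y : α) :
    (expect q fun x => if y = x then 0 else 1) = 1 - (q y).toReal := by
  have mass_eq : (expect q fun x => if y = x then 1 else 0) = (q y).toReal := by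
    simp only [expect, mul_ite, mul_one, mul_zero, eq_comm (a := y), tsum_ite_eq]
  have abs_ite_le (x : α) : |if y = x then (1 : ℝ) else 0| ≤ 1 := by split_ifs <;> norm_num
  calc (expect q fun x => if y = x then 0 else 1)
      = expect q fun x => 1 - if y = x then 1 else 0 :=
        expect_congr fun x _ => by split_ifs <;> norm_num
    _ = 1 - (q y).toReal := by
        rw [expect_sub q (fun _ => abs_one.le) abs_ite_le, expect_const, mass_eq]

lemma one_sub_le_expect_ne {α : Type*} [DecidableEq α] {q : PMF α} {c : ℝ}
    (hq : ∀ x, (q x).toReal ≤ c) (t : PMF α) :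
    1 - c ≤ expect q fun x => expect t fun y => if y = x then 0 else 1 := by
  rw [expect_comm _ _ fun _ _ => abs_ite_zero_one_le _, ← expect_const t (1 - c)]
  refine expect_mono t (fun _ => le_rfl)
    (fun y => abs_expect_le q fun x => abs_ite_zero_one_le (y = x)) fun y => ?_
  rw [expect_ne]
  exact sub_le_sub_left (hq y) 1

lemma one_sub_le_expect_ne_label {p : PMF K} {c : ℝ} (he : ∀ n, (p.map e n).toReal ≤ c)
    (t : PMF ℕ) : 1 - c ≤ expect p fun k => expect t fun j => if j = e k then 0 else 1 :=
  (one_sub_le_expect_ne he t).trans_eq <|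
    expect_map _ _ fun n => abs_expect_le t fun j => abs_ite_zero_one_le (j = n)

lemma one_sub_le_val_guessing {p : PMF K} {c : ℝ} (heL : ∀ k, e k < L)
    (he : ∀ n, (p.map e n).toReal ≤ c) :
    1 - c ≤ val (deterministicSignals p e 0) (guessing L e) := by
  have hg := (isPayoff_guessing L e).abs_le_one
  refine le_val hg PMF.pure fun τ => (one_sub_le_expect_ne_label he (τ 0)).trans_eq ?_
  simp only [payoff_deterministicSignals hg, mixedPayoff, expect_pure,
    guessing_label_left (heL _), Pi.zero_apply]

lemma val_guessing_le {p : PMF K} {c : ℝ} (heL : ∀ k, e k < L)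
    (he : ∀ n, (p.map e n).toReal ≤ c) :
    val (deterministicSignals p 0 e) (guessing L e) ≤ -(1 - c) := by
  have hg := (isPayoff_guessing L e).abs_le_one
  refine val_le hg fun σ => ⟨PMF.pure, ?_⟩
  simpa only [payoff_deterministicSignals hg, mixedPayoff, expect_pure,
    guessing_label_right (heL _), expect_neg, Pi.zero_apply]
    using neg_le_neg (one_sub_le_expect_ne_label he (σ 0))

lemma two_mul_one_sub_le_dVal {p : PMF K} {c : ℝ} (heL : ∀ k, e k < L)
    (he : ∀ n, (p.map e n).toReal ≤ c) :
    2 * (1 - c) ≤ dVal (deterministicSignals p e 0) (deterministicSignals p 0 e) := by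
  have hg := abs_val_sub_val_le_dVal (deterministicSignals p e 0) (deterministicSignals p 0 e)
    (isPayoff_guessing L e)
  linarith [le_of_abs_le hg, one_sub_le_val_guessing heL he, val_guessing_le heL he]

end Guessing

section Labelling

variable {α : Type*}

lemma exists_mode (p : PMF α) : ∃ x ∈ p.support, ∀ y, p y ≤ p x := by
  obtain ⟨x₀, hx₀⟩ := p.support_nonempty
  have finite_above : {x | p x₀ ≤ p x}.Finite :=
    ENNReal.finite_const_le_of_tsum_ne_top p.tsum_coe_ne_top hx₀
  obtain ⟨x, hx, hmax⟩ := finite_above.exists_maximalFor p _ ⟨x₀, le_refl (p x₀)⟩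
  have le_of_ge (y : α) (hy : p x₀ ≤ p y) : p y ≤ p x :=
    (le_total (p y) (p x)).elim id (hmax hy)
  refine ⟨x, ne_of_gt (((p.apply_pos_iff x₀).2 hx₀).trans_le hx), fun y => ?_⟩
  exact (le_total (p x₀) (p y)).elim (le_of_ge y) fun hy => hy.trans hx

lemma exists_finset_toOuterMeasure_compl_le (p : PMF α) {c : ℝ≥0∞} (hc : c ≠ 0) :
    ∃ S : Finset α, p.toOuterMeasure (↑S)ᶜ ≤ c := by
  have tail_tendsto := ENNReal.tendsto_tsum_compl_atTop_zero p.tsum_coe_ne_top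
  obtain ⟨S, hS⟩ := (tail_tendsto.eventually_le_const hc.bot_lt).exists
  refine ⟨S, ?_⟩
  rw [PMF.toOuterMeasure_apply, ← tsum_subtype]
  exact hS

lemma exists_bounded_labelling (p : PMF α) {c : ℝ≥0∞} (hc : c ≠ 0) (hp : ∀ x, p x ≤ c) :
    ∃ (L : ℕ) (e : α → ℕ), (∀ x, e x < L) ∧ ∀ n, p.map e n ≤ c := by
  classical
  obtain ⟨S, hS⟩ := exists_finset_toOuterMeasure_compl_le p hc
  let l := S.toList
  refine ⟨l.length + 1, l.idxOf, fun x => Nat.lt_succ_of_le List.idxOf_le_length, fun n => ?_⟩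
  rw [← PMF.toOuterMeasure_apply_singleton, PMF.toOuterMeasure_map_apply]
  by_cases h : ∃ x ∈ S, l.idxOf x = n
  · obtain ⟨x, hx, rfl⟩ := h
    have fiber_subset : l.idxOf ⁻¹' {l.idxOf x} ⊆ {x} := fun y hy =>
      ((List.idxOf_inj (Finset.mem_toList.2 hx)).1 (Eq.symm hy)).symm
    calc p.toOuterMeasure (l.idxOf ⁻¹' {l.idxOf x})
        ≤ p.toOuterMeasure {x} := p.toOuterMeasure.mono fiber_subset
      _ = p x := p.toOuterMeasure_apply_singleton x
      _ ≤ c := hp x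
  · exact (p.toOuterMeasure.mono fun x hxn hxS => h ⟨x, hxS, hxn⟩).trans hS

end Labelling

theorem diameter_same_prior_general {K : Type} (p : PMF K) :
    IsGreatest {r : ℝ | ∃ u v : InfoStruct K, margK u = p ∧ margK v = p ∧ r = dVal u v}
      (2 * (1 - ⨆ k : K, (p k).toReal)) := by
  obtain ⟨k₀, hk₀, hmax⟩ := exists_mode p
  have iSup_eq : ⨆ k, (p k).toReal = (p k₀).toReal :=
    IsGreatest.csSup_eq ⟨⟨k₀, rfl⟩, Set.forall_mem_range.2 fun k =>
      ENNReal.toReal_mono (p.apply_ne_top k₀) (hmax k)⟩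
  obtain ⟨L, e, heL, he⟩ := exists_bounded_labelling p hk₀ hmax
  have he_toReal : ∀ n, (p.map e n).toReal ≤ (p k₀).toReal := fun n =>
    ENNReal.toReal_mono (p.apply_ne_top k₀) (he n)
  have upper : ∀ u v : InfoStruct K, margK u = p → margK v = p →
      dVal u v ≤ 2 * (1 - (p k₀).toReal) := by
    rintro u v rfl hv
    exact dVal_le_of_margK_eq hv.symm hk₀
  rw [iSup_eq]
  constructor
  · have hu := margK_deterministicSignals p e 0
    have hv := margK_deterministicSignals p 0 e
    exact ⟨_, _, hu, hv, (two_mul_one_sub_le_dVal heL he_toReal).antisymm (upper _ _ hu hv)⟩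
  · rintro _ ⟨u, v, hu, hv, rfl⟩
    exact upper u v hu hv

/-- For a fixed common marginal `p` over the state, the maximum of `d(u,v)`
over information structures `u, v` with `marg_K u = marg_K v = p` equals
`2·(1 − max_k p_k)`. -/
theorem diameter_same_prior (K : Type) [Fintype K] (hK : 2 ≤ Fintype.card K)
    (p : PMF K) :
    IsGreatest {r : ℝ | ∃ u v : InfoStruct K, margK u = p ∧ margK v = p ∧ r = dVal u v}
      (2 * (1 - ⨆ k : K, (p k).toReal)) :=
  diameter_same_prior_general p

end ValueDistance
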